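/- For any reduced word u there is a largest reduced word sr(u), unique up to permutation, such that for every reduced word x: [u·x] ≼ u iff x ≼ sr(u). Moreover sr(u) is a commuting word, a reduced word x is right-absorbed by u iff x ≼ sr(u), and the final segment of u satisfies ũ ≼ sr(u). -/

import Mathlib

variable {V : Type*} [DecidableEq V] [Fintype V]

/-- A letter is a nonempty connected subset of the graph `G`
(connectedness of the induced subgraph includes nonemptiness). -/
def IsLetter (G : SimpleGraph V) (s : Finset V) : Prop :=
  (G.induce (↑s : Set V)).Connected

/-- The type of letters of `G`. -/
def Letter (G : SimpleGraph V) := {s : Finset V // IsLetter G s}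

/-- A word is a finite sequence of letters. -/
abbrev Word (G : SimpleGraph V) := List (Letter G)

/-- Two letters commute iff their union is not a letter (is disconnected). -/
def LCommute (G : SimpleGraph V) (s t : Letter G) : Prop :=
  ¬ IsLetter G (s.1 ∪ t.1)

/-- Two words commute if their letters pairwise commute. -/
def WCommute (G : SimpleGraph V) (u v : Word G) : Prop :=
  ∀ s ∈ u, ∀ t ∈ v, LCommute G s t

/-- One swap of two adjacent commuting letters. -/
def LSwapStep (G : SimpleGraph V) (w w' : Word G) : Prop :=
  ∃ (a b : Word G) (s t : Letter G), LCommute G s t ∧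
    w = a ++ s :: t :: b ∧ w' = a ++ t :: s :: b

/-- Equivalence (`≈`) of words: sequences of swaps of adjacent commuting letters. -/
def WEquiv (G : SimpleGraph V) : Word G → Word G → Prop :=
  Relation.ReflTransGen (LSwapStep G)

/-- A word is reduced if there is no pair of comparable letters such that the
smaller one commutes with all letters strictly in between. -/
def WIsReduced (G : SimpleGraph V) (w : Word G) : Prop :=
  ¬ ∃ (a b c : Word G) (s t : Letter G),
      w = a ++ s :: (b ++ t :: c) ∧
      ((s.1 ⊆ t.1 ∧ ∀ r ∈ b, LCommute G s r) ∨
       (t.1 ⊆ s.1 ∧ ∀ r ∈ b, LCommute G t r))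

/-- A splitting of a letter `s`: a (possibly empty) word whose letters are
proper subsets of `s`. -/
def IsSplitting (G : SimpleGraph V) (x : Word G) (s : Letter G) : Prop :=
  ∀ t ∈ x, t.1 ⊂ s.1

/-- `SplitStep G u v`: `u` is obtained from `v` by replacing one occurrence of a
letter by a splitting of it. -/
def SplitStep (G : SimpleGraph V) (u v : Word G) : Prop :=
  ∃ (a b x : Word G) (s : Letter G),
    v = a ++ s :: b ∧ IsSplitting G x s ∧ u = a ++ x ++ b

/-- One step of the splitting order up to equivalence. -/
def PrecStep (G : SimpleGraph V) (u v : Word G) : Prop :=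
  ∃ u' v', WEquiv G v v' ∧ SplitStep G u' v' ∧ WEquiv G u u'

/-- The splitting order `≺` on words. -/
def WPrec (G : SimpleGraph V) : Word G → Word G → Prop :=
  Relation.TransGen (PrecStep G)

/-- `u ≼ v` : `u ≺ v` or `u ≈ v`. -/
def WPreceq (G : SimpleGraph V) (u v : Word G) : Prop :=
  WPrec G u v ∨ WEquiv G u v

/-- Absorption: if `s ⊆ t`, replace a subword `s·t` (or `t·s`) by `t`. -/
def AbsorbStep (G : SimpleGraph V) (w w' : Word G) : Prop :=
  ∃ (a b : Word G) (s t : Letter G), s.1 ⊆ t.1 ∧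
    (w = a ++ s :: t :: b ∨ w = a ++ t :: s :: b) ∧ w' = a ++ t :: b

/-- A non-splitting reduction step: Commutation or Absorption. -/
def NSStep (G : SimpleGraph V) (w w' : Word G) : Prop :=
  LSwapStep G w w' ∨ AbsorbStep G w w'

/-- `NSRed G u v`: `v` is a non-splitting reduction of `u`, i.e. a reduced word
obtained from `u` by Commutation and Absorption steps only. -/
def NSRed (G : SimpleGraph V) (u v : Word G) : Prop :=
  Relation.ReflTransGen (NSStep G) u v ∧ WIsReduced G v

/-- The letter `t` is left-absorbed by the word `w`: `t` is contained in some
letter of `w` and commutes with all earlier letters. -/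
def LetterLeftAbsorbed (G : SimpleGraph V) (t : Letter G) (w : Word G) : Prop :=
  ∃ (a b : Word G) (s : Letter G), w = a ++ s :: b ∧ t.1 ⊆ s.1 ∧ ∀ r ∈ a, LCommute G t r

/-- The letter `t` is right-absorbed by the word `w`. -/
def LetterRightAbsorbed (G : SimpleGraph V) (t : Letter G) (w : Word G) : Prop :=
  ∃ (a b : Word G) (s : Letter G), w = a ++ s :: b ∧ t.1 ⊆ s.1 ∧ ∀ r ∈ b, LCommute G t r

/-- The letter `t` is properly left-absorbed by the word `w`. -/
def LetterProperLeftAbsorbed (G : SimpleGraph V) (t : Letter G) (w : Word G) : Prop :=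
  ∃ (a b : Word G) (s : Letter G), w = a ++ s :: b ∧ t.1 ⊂ s.1 ∧ ∀ r ∈ a, LCommute G t r

/-- The letter `t` is properly right-absorbed by the word `w`. -/
def LetterProperRightAbsorbed (G : SimpleGraph V) (t : Letter G) (w : Word G) : Prop :=
  ∃ (a b : Word G) (s : Letter G), w = a ++ s :: b ∧ t.1 ⊂ s.1 ∧ ∀ r ∈ b, LCommute G t r

/-- A word `u` is left-absorbed by `w` if each of its letters is. -/
def LeftAbsorbed (G : SimpleGraph V) (u w : Word G) : Prop :=
  ∀ t ∈ u, LetterLeftAbsorbed G t w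

/-- A word `u` is right-absorbed by `w` if each of its letters is. -/
def RightAbsorbed (G : SimpleGraph V) (u w : Word G) : Prop :=
  ∀ t ∈ u, LetterRightAbsorbed G t w

/-- A word `u` is properly left-absorbed by `w` if each of its letters is. -/
def ProperLeftAbsorbed (G : SimpleGraph V) (u w : Word G) : Prop :=
  ∀ t ∈ u, LetterProperLeftAbsorbed G t w

/-- A word `u` is properly right-absorbed by `w` if each of its letters is. -/
def ProperRightAbsorbed (G : SimpleGraph V) (u w : Word G) : Prop :=
  ∀ t ∈ u, LetterProperRightAbsorbed G t w

/-- A commuting word: its letters pairwise commute. -/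
def IsCommuting (G : SimpleGraph V) (u : Word G) : Prop :=
  List.Pairwise (LCommute G) u

/-- The letter `s` is an end of the word `u` if `u ≈ v·s` for some `v`. -/
def IsEnd (G : SimpleGraph V) (s : Letter G) (u : Word G) : Prop :=
  ∃ v, WEquiv G u (v ++ [s])

/-- `t` is the final segment of `u`: the commuting word consisting of all ends of `u`. -/
def IsFinalSegment (G : SimpleGraph V) (t u : Word G) : Prop :=
  IsCommuting G t ∧ ∀ s, s ∈ t ↔ IsEnd G s u

section Letters

omit [Fintype V]

variable {G : SimpleGraph V} {s t r p : Letter G}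

theorem LCommute.symm (h : LCommute G s t) : LCommute G t s := by
  rwa [LCommute, Finset.union_comm]

theorem not_lCommute_of_subset (h : s.1 ⊆ t.1) : ¬ LCommute G s t := by
  rw [LCommute, Finset.union_eq_right.2 h]
  exact not_not_intro t.2

theorem not_lCommute_of_superset (h : t.1 ⊆ s.1) : ¬ LCommute G s t :=
  fun hc => not_lCommute_of_subset h hc.symm

omit [DecidableEq V] in
theorem Letter.nonempty (s : Letter G) : s.1.Nonempty := by
  obtain ⟨x, hx⟩ := s.2.nonempty
  exact ⟨x, hx⟩

theorem IsLetter.union {a b : Finset V} (ha : IsLetter G a) (hb : IsLetter G b)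
    (hab : (a ∩ b).Nonempty) : IsLetter G (a ∪ b) := by
  unfold IsLetter
  rw [Finset.coe_union]
  exact SimpleGraph.induce_union_connected ha.preconnected hb.preconnected (mod_cast hab)

theorem LCommute.mono_left (hst : s.1 ⊆ t.1) (h : LCommute G t r) : LCommute G s r := by
  intro hsr
  obtain ⟨x, hx⟩ := s.nonempty
  have := IsLetter.union t.2 hsr ⟨x, by simp [hst hx, hx]⟩
  rw [← Finset.union_assoc, Finset.union_eq_left.2 hst] at this
  exact h this

theorem LCommute.mono_right (hst : s.1 ⊆ t.1) (h : LCommute G r t) : LCommute G r s :=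
  (h.symm.mono_left hst).symm

theorem isLetter_union_of_adj {x y : V} (hx : x ∈ s.1) (hy : y ∈ t.1) (hxy : G.Adj x y) :
    IsLetter G (s.1 ∪ t.1) := by
  have hpair : IsLetter G {x, y} := by
    unfold IsLetter
    rw [Finset.coe_pair]
    exact SimpleGraph.induce_pair_connected_of_adj hxy
  have h := (s.2.union hpair ⟨x, by simp [hx]⟩).union t.2 ⟨y, by simp [hy]⟩
  convert h using 1
  ext z
  simp only [Finset.mem_union, Finset.mem_insert, Finset.mem_singleton]
  grind

theorem lCommute_iff : LCommute G s t ↔ ∀ x ∈ s.1, ∀ y ∈ t.1, x ≠ y ∧ ¬ G.Adj x y := by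
  constructor
  · intro h x hx y hy
    refine ⟨?_, fun hxy => h (isLetter_union_of_adj hx hy hxy)⟩
    rintro rfl
    exact h (s.2.union t.2 ⟨x, by simp [hx, hy]⟩)
  · intro h hst
    obtain ⟨x, hx⟩ := s.nonempty
    obtain ⟨y, hy⟩ := t.nonempty
    obtain ⟨w⟩ := hst.preconnected ⟨x, by simp [hx]⟩ ⟨y, by simp [hy]⟩
    obtain ⟨d, -, hd1, hd2⟩ := w.exists_boundary_dart {z | z.1 ∈ s.1} hx
      (fun hys => (h y hys y hy).1 rfl)
    have hd3 : d.snd.1 ∈ t.1 := by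
      have := d.snd.2
      simp only [Finset.coe_union, Set.mem_union, Finset.mem_coe] at this
      exact this.resolve_left hd2
    exact (h _ hd1 _ hd3).2 d.adj

theorem LCommute.of_union (hp : p.1 = s.1 ∪ t.1) (hs : LCommute G s r) (ht : LCommute G t r) :
    LCommute G p r := by
  rw [lCommute_iff] at *
  intro x hx
  rw [hp, Finset.mem_union] at hx
  exact hx.elim (hs x) (ht x)

end Letters

section Equivalence

omit [Fintype V]

variable {G : SimpleGraph V} {u v w u' v' : Word G}

theorem LSwapStep.symm (h : LSwapStep G u v) : LSwapStep G v u := by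
  obtain ⟨a, b, s, t, hst, rfl, rfl⟩ := h
  exact ⟨a, b, t, s, hst.symm, rfl, rfl⟩

theorem LSwapStep.perm (h : LSwapStep G u v) : u.Perm v := by
  obtain ⟨a, b, s, t, -, rfl, rfl⟩ := h
  exact (List.Perm.swap t s b).append_left a

theorem LSwapStep.append_left (c : Word G) (h : LSwapStep G u v) :
    LSwapStep G (c ++ u) (c ++ v) := by
  obtain ⟨a, b, s, t, hst, rfl, rfl⟩ := h
  exact ⟨c ++ a, b, s, t, hst, by simp, by simp⟩

theorem LSwapStep.append_right (c : Word G) (h : LSwapStep G u v) :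
    LSwapStep G (u ++ c) (v ++ c) := by
  obtain ⟨a, b, s, t, hst, rfl, rfl⟩ := h
  exact ⟨a, b ++ c, s, t, hst, by simp, by simp⟩

theorem WEquiv.refl (u : Word G) : WEquiv G u u := Relation.ReflTransGen.refl

theorem WEquiv.trans (h : WEquiv G u v) (h' : WEquiv G v w) : WEquiv G u w :=
  Relation.ReflTransGen.trans h h'

theorem WEquiv.symm (h : WEquiv G u v) : WEquiv G v u := by
  induction h with
  | refl => exact WEquiv.refl _
  | tail _ h ih => exact Relation.ReflTransGen.head h.symm ih

theorem WEquiv.perm (h : WEquiv G u v) : u.Perm v := by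
  induction h with
  | refl => exact List.Perm.refl _
  | tail _ h ih => exact ih.trans h.perm

theorem WEquiv.append_left (c : Word G) (h : WEquiv G u v) : WEquiv G (c ++ u) (c ++ v) :=
  by
  induction h with
  | refl => exact WEquiv.refl _
  | tail _ h ih => exact Relation.ReflTransGen.tail ih (h.append_left c)

theorem WEquiv.append_right (c : Word G) (h : WEquiv G u v) : WEquiv G (u ++ c) (v ++ c) :=
  by
  induction h with
  | refl => exact WEquiv.refl _
  | tail _ h ih => exact Relation.ReflTransGen.tail ih (h.append_right c)

theorem WEquiv.append (h : WEquiv G u v) (h' : WEquiv G u' v') :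
    WEquiv G (u ++ u') (v ++ v') :=
  (h.append_right u').trans (h'.append_left v)

theorem wEquiv_cons_comm {s : Letter G} (h : ∀ r ∈ u, LCommute G s r) :
    WEquiv G (s :: u) (u ++ [s]) := by
  induction u with
  | nil => exact WEquiv.refl _
  | cons r u ih =>
    simp only [List.mem_cons, forall_eq_or_imp] at h
    exact Relation.ReflTransGen.head ⟨[], u, s, r, h.1, rfl, rfl⟩
      ((ih h.2).append_left [r])

theorem WCommute.wEquiv_append (h : WCommute G u v) : WEquiv G (u ++ v) (v ++ u) := by
  induction u with
  | nil => simpa using WEquiv.refl v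
  | cons s u ih =>
    have h1 := (ih fun r hr => h r (by simp [hr])).append_left [s]
    have h2 := (wEquiv_cons_comm (h s (by simp))).append_right u
    simpa using h1.trans (by simpa using h2)

theorem wEquiv_filter_append (p : Letter G → Prop) [DecidablePred p]
    (h : ∀ s ∈ u, ∀ t ∈ u, p s → ¬ p t → LCommute G s t) :
    WEquiv G u (u.filter p ++ u.filter (fun s => ¬ p s)) := by
  induction u with
  | nil => exact WEquiv.refl _
  | cons r u ih =>
    have ih := (ih fun s hs t ht => h s (by simp [hs]) t (by simp [ht])).append_left [r]
    by_cases hr : p r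
    · simpa [List.filter_cons, hr] using ih
    · have hc : WEquiv G ([r] ++ u.filter p) (u.filter p ++ [r]) := by
        refine wEquiv_cons_comm fun s hs => ?_
        obtain ⟨hs, hps⟩ := List.mem_filter.1 hs
        exact (h s (by simp [hs]) r (by simp) (of_decide_eq_true hps) hr).symm
      have := ih.trans (by simpa using hc.append_right (u.filter fun s => ¬ p s))
      simpa [List.filter_cons, hr] using this

end Equivalence

section Absorption

omit [Fintype V]

variable {G : SimpleGraph V} {u v w : Word G} {p q r s t : Letter G}

theorem letterLeftAbsorbed_append :
    LetterLeftAbsorbed G p (u ++ v) ↔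
      LetterLeftAbsorbed G p u ∨ (∀ r ∈ u, LCommute G p r) ∧ LetterLeftAbsorbed G p v := by
  constructor
  · rintro ⟨a, b, s, h, hps, hc⟩
    obtain ⟨c, rfl, rfl⟩ | ⟨c, rfl, hv⟩ := List.append_eq_append_iff.1 h
    · exact .inr ⟨fun r hr => hc r (by simp [hr]), c, b, s, rfl, hps,
        fun r hr => hc r (by simp [hr])⟩
    · cases c with
      | nil =>
        rw [List.nil_append] at hv
        exact .inr ⟨by simpa using hc, [], b, s, hv.symm, hps, by simp⟩
      | cons x c =>
        obtain ⟨rfl, rfl⟩ := List.cons_eq_cons.1 hv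
        exact .inl ⟨a, c, s, rfl, hps, hc⟩
  · rintro (⟨a, b, s, rfl, hps, hc⟩ | ⟨h, a, b, s, rfl, hps, hc⟩)
    · exact ⟨a, b ++ v, s, by simp, hps, hc⟩
    · exact ⟨u ++ a, b, s, by simp, hps, fun r hr => (List.mem_append.1 hr).elim (h r) (hc r)⟩

theorem letterLeftAbsorbed_reverse :
    LetterLeftAbsorbed G p u.reverse ↔ LetterRightAbsorbed G p u := by
  constructor
  · rintro ⟨a, b, s, h, hps, hc⟩
    exact ⟨b.reverse, a.reverse, s, by rw [← u.reverse_reverse, h]; simp, hps, by simpa using hc⟩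
  · rintro ⟨a, b, s, rfl, hps, hc⟩
    exact ⟨b.reverse, a.reverse, s, by simp, hps, by simpa using hc⟩

theorem letterRightAbsorbed_append :
    LetterRightAbsorbed G p (u ++ v) ↔
      LetterRightAbsorbed G p v ∨ (∀ r ∈ v, LCommute G p r) ∧ LetterRightAbsorbed G p u := by
  simp only [← letterLeftAbsorbed_reverse, List.reverse_append, letterLeftAbsorbed_append,
    List.mem_reverse]

theorem letterLeftAbsorbed_singleton : LetterLeftAbsorbed G p [s] ↔ p.1 ⊆ s.1 := by
  constructor
  · rintro ⟨a, b, r, h, hps, -⟩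
    have : r ∈ [s] := by rw [h]; simp
    rwa [List.mem_singleton.1 this] at hps
  · exact fun h => ⟨[], [], s, rfl, h, by simp⟩

theorem letterRightAbsorbed_singleton : LetterRightAbsorbed G p [s] ↔ p.1 ⊆ s.1 := by
  rw [← letterLeftAbsorbed_reverse, List.reverse_singleton, letterLeftAbsorbed_singleton]

theorem letterLeftAbsorbed_cons :
    LetterLeftAbsorbed G p (s :: u) ↔ p.1 ⊆ s.1 ∨ LCommute G p s ∧ LetterLeftAbsorbed G p u := by
  rw [← List.singleton_append, letterLeftAbsorbed_append, letterLeftAbsorbed_singleton]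
  simp

theorem letterRightAbsorbed_concat :
    LetterRightAbsorbed G p (u ++ [s]) ↔
      p.1 ⊆ s.1 ∨ LCommute G p s ∧ LetterRightAbsorbed G p u := by
  rw [letterRightAbsorbed_append, letterRightAbsorbed_singleton]
  simp

theorem LSwapStep.reverse (h : LSwapStep G u v) : LSwapStep G u.reverse v.reverse := by
  obtain ⟨a, b, s, t, hst, rfl, rfl⟩ := h
  exact ⟨b.reverse, a.reverse, t, s, hst.symm, by simp, by simp⟩

theorem LSwapStep.letterLeftAbsorbed (h : LSwapStep G u v) (hp : LetterLeftAbsorbed G p u) :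
    LetterLeftAbsorbed G p v := by
  obtain ⟨a, b, s, t, hst, rfl, rfl⟩ := h
  simp only [letterLeftAbsorbed_append, letterLeftAbsorbed_cons] at hp ⊢
  have h1 : p.1 ⊆ s.1 → LCommute G p t := fun h => hst.mono_left h
  tauto

theorem LSwapStep.letterRightAbsorbed (h : LSwapStep G u v) (hp : LetterRightAbsorbed G p u) :
    LetterRightAbsorbed G p v := by
  rw [← letterLeftAbsorbed_reverse] at hp ⊢
  exact h.reverse.letterLeftAbsorbed hp

theorem WEquiv.letterRightAbsorbed (h : WEquiv G u v) (hp : LetterRightAbsorbed G p u) :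
    LetterRightAbsorbed G p v := by
  induction h with
  | refl => exact hp
  | tail _ h ih => exact h.letterRightAbsorbed ih

theorem wIsReduced_iff :
    WIsReduced G w ↔ ∀ (a b : Word G) (p : Letter G), w = a ++ p :: b →
      ¬ LetterRightAbsorbed G p a ∧ ¬ LetterLeftAbsorbed G p b := by
  constructor
  · rintro h a b p rfl
    refine ⟨?_, ?_⟩
    · rintro ⟨a', b', s, rfl, hps, hc⟩
      exact h ⟨a', b', b, s, p, by simp, .inr ⟨hps, hc⟩⟩
    · rintro ⟨a', b', s, rfl, hps, hc⟩
      exact h ⟨a, a', b', p, s, by simp, .inl ⟨hps, hc⟩⟩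
  · rintro h ⟨a, b, c, s, t, rfl, ⟨hst, hc⟩ | ⟨hts, hc⟩⟩
    · exact (h a (b ++ t :: c) s rfl).2 ⟨b, c, t, rfl, hst, hc⟩
    · exact (h (a ++ s :: b) c t (by simp)).1 ⟨a, b, s, rfl, hts, hc⟩

theorem LSwapStep.wIsReduced (h : LSwapStep G u v) (hu : WIsReduced G u) : WIsReduced G v := by
  rw [wIsReduced_iff] at hu ⊢
  intro a' b' p hv
  obtain ⟨a, b, s, t, hst, rfl, rfl⟩ := h
  have hswap : ∀ c d : Word G, LSwapStep G (c ++ t :: s :: d) (c ++ s :: t :: d) :=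
    fun c d => ⟨c, d, t, s, hst.symm, rfl, rfl⟩
  obtain ⟨c, rfl, h⟩ | ⟨c, rfl, h⟩ := List.append_eq_append_iff.1 hv
  · match c, h with
    | [], h =>
      obtain ⟨rfl, rfl⟩ := List.cons_eq_cons.1 h
      have := hu (a ++ [s]) b t (by simp)
      rw [letterRightAbsorbed_concat] at this
      rw [letterLeftAbsorbed_cons, List.append_nil]
      exact ⟨fun h => this.1 (.inr ⟨hst.symm, h⟩), fun h => h.elim
        (fun h => not_lCommute_of_superset h hst) fun h => this.2 h.2⟩
    | [x], h =>
      simp only [List.cons_append, List.nil_append, List.cons.injEq] at h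
      obtain ⟨rfl, rfl, rfl⟩ := h
      have := hu a (t :: b) s rfl
      rw [letterLeftAbsorbed_cons] at this
      rw [letterRightAbsorbed_concat]
      exact ⟨fun h => h.elim (fun h => not_lCommute_of_subset h hst) fun h => this.1 h.2,
        fun h => this.2 (.inr ⟨hst, h⟩)⟩
    | x :: y :: c, h =>
      simp only [List.cons_append, List.cons.injEq] at h
      obtain ⟨rfl, rfl, rfl⟩ := h
      have := hu (a ++ s :: t :: c) b' p (by simp)
      exact ⟨fun h => this.1 ((hswap a c).letterRightAbsorbed h), this.2⟩
  · match c, h with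
    | [], h =>
      obtain ⟨rfl, rfl⟩ := List.cons_eq_cons.1 h
      have := hu (a' ++ [s]) b p (by simp)
      rw [letterRightAbsorbed_concat] at this
      rw [letterLeftAbsorbed_cons]
      exact ⟨fun h => this.1 (.inr ⟨hst.symm, h⟩), fun h => h.elim
        (fun h => not_lCommute_of_superset h hst) fun h => this.2 h.2⟩
    | x :: c, h =>
      obtain ⟨rfl, rfl⟩ := List.cons_eq_cons.1 h
      have := hu a' (c ++ s :: t :: b) p (by simp)
      exact ⟨this.1, fun h => this.2 ((hswap c b).letterLeftAbsorbed h)⟩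

theorem WEquiv.wIsReduced (h : WEquiv G u v) (hu : WIsReduced G u) : WIsReduced G v := by
  induction h with
  | refl => exact hu
  | tail _ h ih => exact h.wIsReduced ih

theorem WIsReduced.of_infix (hw : WIsReduced G w) (h : u <:+: w) : WIsReduced G u := by
  obtain ⟨x, y, rfl⟩ := h
  rintro ⟨a, b, c, s, t, rfl, h⟩
  exact hw ⟨x ++ a, b, c ++ y, s, t, by simp, h⟩

theorem WIsReduced.eq_singleton (hw : WIsReduced G w) (h : ∀ t ∈ w, t.1 ⊆ s.1) (hs : s ∈ w) :
    w = [s] := by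
  obtain ⟨a, b, rfl⟩ := List.append_of_mem hs
  have ha : a = [] := by
    rcases a.eq_nil_or_concat with rfl | ⟨a, x, rfl⟩
    · rfl
    · exact absurd ⟨a, [], b, x, s, by simp, .inl ⟨h x (by simp), by simp⟩⟩ hw
  have hb : b = [] := by
    rcases b with _ | ⟨x, b⟩
    · rfl
    · exact absurd ⟨a, [], b, s, x, by simp, .inr ⟨h x (by simp), by simp⟩⟩ hw
  simp [ha, hb]

theorem IsCommuting.wIsReduced (h : IsCommuting G u) : WIsReduced G u := by
  rintro ⟨a, b, c, s, t, rfl, hst⟩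
  have hc : LCommute G s t := by
    rw [IsCommuting, List.pairwise_append, List.pairwise_cons] at h
    exact h.2.1.1 t (by simp)
  rcases hst with hst | hst
  · exact not_lCommute_of_subset hst.1 hc
  · exact not_lCommute_of_superset hst.1 hc

/-- If `t` is not right-absorbed by the reduced word `u`, then appending `t` and letting it absorb
as many letters `d` of `u` as possible gives a reduced word. -/
theorem WIsReduced.exists_concat (hu : WIsReduced G u) (ht : ¬ LetterRightAbsorbed G t u) :
    ∃ k d : Word G, WEquiv G u (k ++ d) ∧ IsSplitting G d t ∧ WIsReduced G (k ++ [t]) := by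
  classical
  have hex : ∃ n, ∃ k d : Word G, k.length = n ∧ WEquiv G u (k ++ d) ∧ IsSplitting G d t :=
    ⟨_, u, [], rfl, by simpa using WEquiv.refl u, by simp [IsSplitting]⟩
  obtain ⟨k, d, hk, hud, hd⟩ := Nat.find_spec hex
  refine ⟨k, d, hud, hd, ?_⟩
  have hkd := hud.wIsReduced hu
  rintro ⟨a, b, c, p, q, h, hpq⟩
  rcases c.eq_nil_or_concat with rfl | ⟨c, x, rfl⟩
  · have h' : k ++ [t] = (a ++ p :: b) ++ [q] := by simpa using h
    obtain ⟨rfl, hq⟩ := List.append_inj' h' rfl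
    obtain rfl : t = q := by simpa using hq
    have hsup : ¬ (t.1 ⊆ p.1 ∧ ∀ r ∈ b, LCommute G t r) := by
      rintro ⟨htp, hb⟩
      cases d with
      | nil =>
        refine ht (hud.symm.letterRightAbsorbed ⟨a, b, p, by simp, htp, hb⟩)
      | cons x d =>
        have hx : x.1 ⊆ t.1 := (hd x (by simp)).1
        exact hkd ⟨a, b, d, p, x, by simp, .inr ⟨hx.trans htp, fun r hr => (hb r hr).mono_left hx⟩⟩
    rcases hpq with ⟨hpt, hb⟩ | htp
    · refine Nat.find_min hex (m := (a ++ b).length) (by rw [← hk]; simp) ⟨a ++ b, p :: d, rfl, ?_, ?_⟩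
      · refine hud.trans ?_
        simpa using ((wEquiv_cons_comm hb).append_left a).append_right d
      · intro r hr
        rcases List.mem_cons.1 hr with rfl | hr
        · refine Finset.ssubset_iff_subset_ne.2 ⟨hpt, fun he => hsup ⟨he.ge, ?_⟩⟩
          rwa [← Subtype.ext he]
        · exact hd r hr
    · exact hsup htp
  · have h' : k ++ [t] = (a ++ p :: (b ++ q :: c)) ++ [x] := by simpa using h
    obtain ⟨rfl, -⟩ := List.append_inj' h' rfl
    exact hkd ⟨a, b, c ++ d, p, q, by simp, hpq⟩

end Absorption

section SplittingOrder

omit [Fintype V]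

variable {G : SimpleGraph V} {u v w x y u' v' : Word G} {s t : Letter G}

omit [DecidableEq V] in
theorem SplitStep.append_left (c : Word G) (h : SplitStep G u v) :
    SplitStep G (c ++ u) (c ++ v) := by
  obtain ⟨a, b, x, s, rfl, hx, rfl⟩ := h
  exact ⟨c ++ a, b, x, s, by simp, hx, by simp⟩

omit [DecidableEq V] in
theorem SplitStep.append_right (c : Word G) (h : SplitStep G u v) :
    SplitStep G (u ++ c) (v ++ c) := by
  obtain ⟨a, b, x, s, rfl, hx, rfl⟩ := h
  exact ⟨a, b ++ c, x, s, by simp, hx, by simp⟩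

theorem WEquiv.wPreceq (h : WEquiv G u v) : WPreceq G u v := .inr h

theorem SplitStep.wPrec (h : SplitStep G u v) : WPrec G u v :=
  .single ⟨u, v, .refl v, h, .refl u⟩

theorem WEquiv.trans_wPrec (h : WEquiv G u v) (h' : WPrec G v w) : WPrec G u w := by
  obtain ⟨y, ⟨a, b, h1, h2, h3⟩, h4⟩ := Relation.TransGen.head'_iff.1 h'
  exact Relation.TransGen.head' ⟨a, b, h1, h2, h.trans h3⟩ h4

theorem WPrec.trans_wEquiv (h : WPrec G u v) (h' : WEquiv G v w) : WPrec G u w := by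
  obtain ⟨y, h4, ⟨a, b, h1, h2, h3⟩⟩ := Relation.TransGen.tail'_iff.1 h
  exact Relation.TransGen.tail' h4 ⟨a, b, h'.symm.trans h1, h2, h3⟩

theorem WPreceq.trans (h : WPreceq G u v) (h' : WPreceq G v w) : WPreceq G u w := by
  rcases h with h | h <;> rcases h' with h' | h'
  · exact .inl (Relation.TransGen.trans h h')
  · exact .inl (h.trans_wEquiv h')
  · exact .inl (h.trans_wPrec h')
  · exact .inr (h.trans h')

/-- Induction over a chain of elementary steps from `u` up to `v`. -/
theorem WPreceq.induction_step {P : Word G → Prop} (h : WPreceq G u v) (refl : P u)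
    (swap : ∀ y z, LSwapStep G y z → P y → P z) (split : ∀ y z, SplitStep G y z → P y → P z) :
    P v := by
  have hequiv : ∀ {y z}, WEquiv G y z → P y → P z := by
    intro y z hyz hy
    induction hyz with
    | refl => exact hy
    | tail _ h ih => exact swap _ _ h ih
  rcases h with h | h
  · have hstep : ∀ {y z}, PrecStep G y z → P y → P z := by
      rintro y z ⟨y', z', h1, h2, h3⟩ hy
      exact hequiv h1.symm (split _ _ h2 (hequiv h3 hy))
    induction h with
    | single h => exact hstep h refl
    | tail _ h ih => exact hstep h ih
  · exact hequiv h refl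

theorem WPreceq.append_left (c : Word G) (h : WPreceq G u v) : WPreceq G (c ++ u) (c ++ v) :=
  h.induction_step (P := fun y => WPreceq G (c ++ u) (c ++ y)) (.inr (.refl _))
    (fun _ _ h hy => hy.trans (.inr (.single (h.append_left c))))
    (fun _ _ h hy => hy.trans (.inl (h.append_left c).wPrec))

theorem WPreceq.append_right (c : Word G) (h : WPreceq G u v) : WPreceq G (u ++ c) (v ++ c) :=
  h.induction_step (P := fun y => WPreceq G (u ++ c) (y ++ c)) (.inr (.refl _))
    (fun _ _ h hy => hy.trans (.inr (.single (h.append_right c))))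
    (fun _ _ h hy => hy.trans (.inl (h.append_right c).wPrec))

theorem WPreceq.append (h : WPreceq G u v) (h' : WPreceq G u' v') :
    WPreceq G (u ++ u') (v ++ v') :=
  (h.append_right u').trans (h'.append_left v)

theorem nil_wPreceq (u : Word G) : WPreceq G [] u := by
  induction u with
  | nil => exact .inr (.refl _)
  | cons s u ih =>
    exact ih.trans (.inl (SplitStep.wPrec ⟨[], u, [], s, rfl, by simp [IsSplitting], rfl⟩))

theorem List.Sublist.wPreceq (h : u.Sublist v) : WPreceq G u v := by
  induction h with
  | slnil => exact nil_wPreceq _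
  | cons a _ ih => exact (nil_wPreceq [a]).append ih
  | cons_cons a _ ih => exact ih.append_left [a]

theorem WPreceq.exists_subset (h : WPreceq G u v) (hs : s ∈ u) : ∃ t ∈ v, s.1 ⊆ t.1 := by
  refine h.induction_step (P := fun y => ∃ t ∈ y, s.1 ⊆ t.1) ⟨s, hs, Finset.Subset.refl _⟩ ?_ ?_
  · rintro y z hyz ⟨t, ht, hst⟩
    exact ⟨t, hyz.perm.mem_iff.1 ht, hst⟩
  · rintro y z ⟨a, b, x, r, rfl, hx, rfl⟩ ⟨t, ht, hst⟩
    by_cases htx : t ∈ x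
    · exact ⟨r, by simp, hst.trans (hx t htx).1⟩
    · exact ⟨t, by simp at ht ⊢; tauto, hst⟩

/-- The multiset of the subsets of `V` occurring in a word. -/
def Word.content (w : Word G) : Multiset (Finset V) := (w : Multiset (Letter G)).map fun s => s.1

omit [DecidableEq V] in
theorem Word.content_append (u v : Word G) :
    Word.content (u ++ v) = Word.content u + Word.content v := by
  rw [Word.content, ← Multiset.coe_add, Multiset.map_add]
  rfl

omit [DecidableEq V] in
theorem Word.content_cons (s : Letter G) (u : Word G) :
    Word.content (s :: u) = {s.1} + Word.content u := by
  rw [Word.content, ← Multiset.cons_coe, Multiset.map_cons, Multiset.singleton_add]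
  rfl

theorem WEquiv.content_eq (h : WEquiv G u v) : Word.content u = Word.content v :=
  congrArg (Multiset.map fun s : Letter G => s.1) (Multiset.coe_eq_coe.2 h.perm)

omit [DecidableEq V] in
theorem SplitStep.content_lt (h : SplitStep G u v) :
    (Word.content u).IsDershowitzMannaLT (Word.content v) := by
  obtain ⟨a, b, x, s, rfl, hx, rfl⟩ := h
  refine ⟨Word.content (a ++ b), Word.content x, {s.1}, by simp, ?_, ?_, ?_⟩
  · simp only [Word.content_append]
    abel
  · simp only [Word.content_append, Word.content_cons]
    abel
  · intro y hy
    obtain ⟨t, ht, rfl⟩ := Multiset.mem_map.1 hy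
    exact ⟨s.1, by simp, hx t ht⟩

theorem WPrec.content_lt (h : WPrec G u v) :
    (Word.content u).IsDershowitzMannaLT (Word.content v) := by
  have hstep : ∀ {y z}, PrecStep G y z →
      (Word.content y).IsDershowitzMannaLT (Word.content z) := by
    rintro y z ⟨y', z', h1, h2, h3⟩
    rw [h1.content_eq, h3.content_eq]
    exact h2.content_lt
  induction h with
  | single h => exact hstep h
  | tail _ h ih => exact ih.trans (hstep h)

theorem WPrec.irrefl (u : Word G) : ¬ WPrec G u u :=
  fun h => Multiset.wellFounded_isDershowitzMannaLT.irrefl.irrefl _ h.content_lt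

theorem WPrec.not_wPreceq (h : WPrec G u v) : ¬ WPreceq G v u := by
  rintro (h' | h')
  · exact WPrec.irrefl u (Relation.TransGen.trans h h')
  · exact WPrec.irrefl u (h.trans_wEquiv h')

theorem WPreceq.antisymm (h : WPreceq G u v) (h' : WPreceq G v u) : WEquiv G u v :=
  h.resolve_left fun h => h.not_wPreceq h'

/-- `x` is either the one-letter word `s` or a splitting of `s`. -/
def IsPiece (G : SimpleGraph V) (x : Word G) (s : Letter G) : Prop :=
  x = [s] ∨ IsSplitting G x s

omit [DecidableEq V] in
theorem IsPiece.subset (h : IsPiece G x s) (ht : t ∈ x) : t.1 ⊆ s.1 := by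
  rcases h with rfl | h
  · rw [List.mem_singleton.1 ht]
  · exact (h t ht).1

theorem IsPiece.wPreceq (h : IsPiece G x s) : WPreceq G x [s] := by
  rcases h with rfl | h
  · exact .inr (.refl _)
  · exact .inl (SplitStep.wPrec ⟨[], [], x, s, rfl, h, by simp⟩)

theorem WIsReduced.isPiece (hx : WIsReduced G x) (h : ∀ t ∈ x, t.1 ⊆ s.1) : IsPiece G x s := by
  by_cases hs : s ∈ x
  · exact .inl (hx.eq_singleton h hs)
  · refine .inr fun t ht => Finset.ssubset_iff_subset_ne.2 ⟨h t ht, fun he => hs ?_⟩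
    rwa [← Subtype.ext he]

/-- `RefinesTo w v`: `w` is obtained by replacing each letter of `v` by one of its pieces. -/
inductive RefinesTo (G : SimpleGraph V) : Word G → Word G → Prop
  | nil : RefinesTo G [] []
  | cons {x w v : Word G} {s : Letter G} :
      IsPiece G x s → RefinesTo G w v → RefinesTo G (x ++ w) (s :: v)

omit [DecidableEq V] in
theorem refinesTo_nil_iff : RefinesTo G w [] ↔ w = [] :=
  ⟨fun h => by cases h; rfl, by rintro rfl; exact .nil⟩

omit [DecidableEq V] in
theorem refinesTo_cons_iff :
    RefinesTo G w (s :: v) ↔ ∃ x y, w = x ++ y ∧ IsPiece G x s ∧ RefinesTo G y v :=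
  ⟨fun h => by cases h with | cons h1 h2 => exact ⟨_, _, rfl, h1, h2⟩,
    by rintro ⟨x, y, rfl, h1, h2⟩; exact .cons h1 h2⟩

omit [DecidableEq V] in
theorem RefinesTo.refl (w : Word G) : RefinesTo G w w := by
  induction w with
  | nil => exact .nil
  | cons s w ih => exact .cons (x := [s]) (.inl rfl) ih

omit [DecidableEq V] in
theorem refinesTo_append_iff :
    RefinesTo G w (u ++ v) ↔ ∃ x y, w = x ++ y ∧ RefinesTo G x u ∧ RefinesTo G y v := by
  induction u generalizing w with
  | nil => simp [refinesTo_nil_iff]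
  | cons s u ih =>
    simp only [List.cons_append, refinesTo_cons_iff, ih]
    constructor
    · rintro ⟨x, _, rfl, hx, y, z, rfl, hy, hz⟩
      exact ⟨x ++ y, z, by simp, ⟨x, y, rfl, hx, hy⟩, hz⟩
    · rintro ⟨_, z, rfl, ⟨x, y, rfl, hx, hy⟩, hz⟩
      exact ⟨x, y ++ z, by simp, hx, y, z, rfl, hy, hz⟩

theorem RefinesTo.wPreceq (h : RefinesTo G w v) : WPreceq G w v := by
  induction h with
  | nil => exact .inr (.refl _)
  | cons h _ ih => exact h.wPreceq.append ih

theorem WPreceq.exists_refinesTo (h : WPreceq G w v) :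
    ∃ w', WEquiv G w w' ∧ RefinesTo G w' v := by
  refine h.induction_step (P := fun y => ∃ w', WEquiv G w w' ∧ RefinesTo G w' y) ⟨w, .refl w, .refl w⟩ ?_ ?_
  · rintro _ _ ⟨a, b, s, t, hst, rfl, rfl⟩ ⟨w', hw, hr⟩
    simp only [refinesTo_append_iff, refinesTo_cons_iff] at hr
    obtain ⟨wa, _, rfl, ha, x, _, rfl, hx, y, wb, rfl, hy, hb⟩ := hr
    refine ⟨wa ++ (y ++ (x ++ wb)), hw.trans ?_, ?_⟩
    · have hxy : WCommute G x y := fun p hp q hq =>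
        (hst.mono_left (hx.subset hp)).mono_right (hy.subset hq)
      simpa using (hxy.wEquiv_append.append_left wa).append_right wb
    · exact refinesTo_append_iff.2 ⟨_, _, rfl, ha, .cons hy (.cons hx hb)⟩
  · rintro _ _ ⟨a, b, x, s, rfl, hx, rfl⟩ ⟨w', hw, hr⟩
    simp only [refinesTo_append_iff] at hr
    obtain ⟨_, wb, rfl, ⟨wa, wx, rfl, ha, hwx⟩, hb⟩ := hr
    refine ⟨wa ++ (wx ++ wb), by simpa using hw, ?_⟩
    refine refinesTo_append_iff.2 ⟨_, _, rfl, ha, .cons (.inr fun t ht => ?_) hb⟩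
    obtain ⟨r, hr, htr⟩ := hwx.wPreceq.exists_subset ht
    exact Finset.ssubset_of_subset_of_ssubset htr (hx r hr)

/-- Non-splitting reductions of `v` stay above every reduced word below `v`. -/
theorem WPreceq.of_nsStep (h : WPreceq G w v) (hw : WIsReduced G w) (hv : NSStep G v v') :
    WPreceq G w v' := by
  rcases hv with hv | ⟨a, b, s, t, hst, hv, rfl⟩
  · exact h.trans (.inr (.single hv))
  · obtain ⟨w', hww, hr⟩ := h.exists_refinesTo
    have hw' := hww.wIsReduced hw
    have key : ∃ wa z wb, w' = wa ++ z ++ wb ∧ RefinesTo G wa a ∧ RefinesTo G wb b ∧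
        ∀ r ∈ z, r.1 ⊆ t.1 := by
      rcases hv with rfl | rfl <;>
      · simp only [refinesTo_append_iff, refinesTo_cons_iff] at hr
        obtain ⟨wa, _, rfl, ha, x, _, rfl, hx, y, wb, rfl, hy, hb⟩ := hr
        refine ⟨wa, x ++ y, wb, by simp, ha, hb, fun r hr => ?_⟩
        rcases List.mem_append.1 hr with hr | hr
        · exact (hx.subset hr).trans (by first | exact hst | exact Finset.Subset.refl _)
        · exact (hy.subset hr).trans (by first | exact hst | exact Finset.Subset.refl _)
    obtain ⟨wa, z, wb, rfl, ha, hb, hz⟩ := key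
    have hp := (hw'.of_infix ⟨wa, wb, rfl⟩).isPiece hz
    refine hww.wPreceq.trans ?_
    rw [List.append_assoc]
    exact ha.wPreceq.append (RefinesTo.cons hp hb).wPreceq

theorem wPreceq_of_forall_subset (hv : IsCommuting G v) (hw : WIsReduced G w)
    (h : ∀ s ∈ w, ∃ t ∈ v, s.1 ⊆ t.1) : WPreceq G w v := by
  induction v generalizing w with
  | nil =>
    cases w with
    | nil => exact .inr (.refl _)
    | cons s w => simpa using h s (by simp)
  | cons t v ih =>
    obtain ⟨htv, hv⟩ := List.pairwise_cons.1 hv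
    have hsplit := wEquiv_filter_append (u := w) (fun s => s.1 ⊆ t.1) <| by
      intro s hs r hr hst hrt
      obtain ⟨q, hq, hrq⟩ := h r hr
      have hq : q ∈ v := (List.mem_cons.1 hq).resolve_left (by rintro rfl; exact hrt hrq)
      exact ((htv q hq).mono_left hst).mono_right hrq
    have hred := hsplit.wIsReduced hw
    refine hsplit.wPreceq.trans (WPreceq.append (v := [t]) (IsPiece.wPreceq ?_) (ih hv ?_ ?_))
    · exact (hred.of_infix (List.prefix_append _ _).isInfix).isPiece fun s hs => by
        simpa using (List.mem_filter.1 hs).2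
    · exact hred.of_infix (List.suffix_append _ _).isInfix
    · intro s hs
      obtain ⟨hs, hst⟩ := List.mem_filter.1 hs
      obtain ⟨q, hq, hsq⟩ := h s hs
      refine ⟨q, (List.mem_cons.1 hq).resolve_left ?_, hsq⟩
      rintro rfl
      simp [hsq] at hst

end SplittingOrder

section RightAbsorption

omit [Fintype V]

variable {G : SimpleGraph V} {u x : Word G} {s t p : Letter G}

theorem LetterRightAbsorbed.mono (hst : s.1 ⊆ t.1) (h : LetterRightAbsorbed G t u) :
    LetterRightAbsorbed G s u := by
  obtain ⟨a, b, r, rfl, htr, hb⟩ := h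
  exact ⟨a, b, r, rfl, hst.trans htr, fun q hq => (hb q hq).mono_left hst⟩

theorem LetterRightAbsorbed.union (hs : LetterRightAbsorbed G s u)
    (ht : LetterRightAbsorbed G t u) (hp : p.1 = s.1 ∪ t.1) : LetterRightAbsorbed G p u := by
  have hst : ¬ LCommute G s t := not_not_intro (hp ▸ p.2)
  induction u using List.reverseRecOn with
  | nil =>
    obtain ⟨a, b, r, h, -⟩ := hs
    simp at h
  | append_singleton u r ih =>
    rw [letterRightAbsorbed_concat] at *
    rcases hs with hs | ⟨hs, hs'⟩ <;> rcases ht with ht | ⟨ht, ht'⟩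
    · exact .inl (hp ▸ Finset.union_subset hs ht)
    · exact absurd (ht.mono_right hs).symm hst
    · exact absurd (hs.mono_right ht) hst
    · exact .inr ⟨.of_union hp hs ht, ih hs' ht'⟩

theorem IsEnd.letterRightAbsorbed (h : IsEnd G s u) : LetterRightAbsorbed G s u := by
  obtain ⟨v, hv⟩ := h
  exact hv.symm.letterRightAbsorbed (letterRightAbsorbed_concat.2 (.inl (Finset.Subset.refl _)))

theorem RightAbsorbed.nsStep_append (h : RightAbsorbed G x u) :
    Relation.ReflTransGen (NSStep G) (u ++ x) u := by
  induction x with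
  | nil => simpa using Relation.ReflTransGen.refl
  | cons t x ih =>
    refine .trans ?_ (ih fun s hs => h s (by simp [hs]))
    obtain ⟨a, b, s, rfl, hts, hb⟩ := h t (by simp)
    have h1 : WEquiv G (a ++ s :: b ++ t :: x) (a ++ s :: t :: (b ++ x)) := by
      simpa using (((wEquiv_cons_comm hb).symm.append_left (a ++ [s])).append_right x)
    refine Relation.ReflTransGen.tail (Relation.ReflTransGen.mono (fun _ _ h => Or.inl h) _ _ h1) (.inr ?_)
    exact ⟨a, b ++ x, t, s, hts, .inr rfl, by simp⟩

theorem WIsReduced.rightAbsorbed_of_wPreceq {r : Word G} (hu : WIsReduced G u)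
    (hr : Relation.ReflTransGen (NSStep G) (u ++ x) r) (hru : WPreceq G r u) :
    RightAbsorbed G x u := by
  intro t ht
  by_contra hna
  obtain ⟨k, d, hud, hd, hkt⟩ := hu.exists_concat hna
  have hlt : WPrec G u (k ++ [t]) :=
    hud.trans_wPrec (SplitStep.wPrec ⟨k, [], d, t, rfl, hd, by simp⟩)
  have hku : WPreceq G k u := ((List.sublist_append_left k d).wPreceq).trans hud.symm.wPreceq
  have hle : WPreceq G (k ++ [t]) (u ++ x) :=
    hku.append (List.singleton_sublist.2 ht).wPreceq
  have hle' : WPreceq G (k ++ [t]) r := by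
    clear hru
    induction hr with
    | refl => exact hle
    | tail _ h ih => exact ih.of_nsStep hkt h
  exact hlt.not_wPreceq (hle'.trans hru)

theorem WIsReduced.exists_nsRed_iff (hu : WIsReduced G u) :
    (∃ r, NSRed G (u ++ x) r ∧ WPreceq G r u) ↔ RightAbsorbed G x u :=
  ⟨fun ⟨_, hr, hru⟩ => hu.rightAbsorbed_of_wPreceq hr.1 hru,
    fun h => ⟨u, ⟨h.nsStep_append, hu⟩, .inr (.refl u)⟩⟩

end RightAbsorption

/-- The maximal letters right-absorbed by a word can be arranged into a commuting word. -/
theorem exists_isCommuting_rightAbsorbed_iff (G : SimpleGraph V) (u : Word G) :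
    ∃ m : Word G, IsCommuting G m ∧
      ∀ s, LetterRightAbsorbed G s u ↔ ∃ t ∈ m, s.1 ⊆ t.1 := by
  classical
  let P : Finset V → Prop := fun c => ∃ h : IsLetter G c, LetterRightAbsorbed G ⟨c, h⟩ u
  have : Finite (Letter G) := inferInstanceAs (Finite {s : Finset V // IsLetter G s})
  have hfin : {s : Letter G | Maximal P s.1}.Finite := Set.toFinite _
  have hmem : ∀ s, s ∈ hfin.toFinset.toList ↔ Maximal P s.1 :=
    fun s => Finset.mem_toList.trans hfin.mem_toFinset
  refine ⟨hfin.toFinset.toList, ?_, fun s => ⟨fun hs => ?_, ?_⟩⟩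
  · refine (Finset.nodup_toList _).pairwise_of_forall_ne fun s hs t ht hne hst => hne ?_
    rw [hmem] at hs ht
    have hP : P (s.1 ∪ t.1) :=
      ⟨hst, hs.prop.choose_spec.union ht.prop.choose_spec rfl⟩
    exact Subtype.ext <| (hs.eq_of_le hP Finset.subset_union_left).trans
      (ht.eq_of_le hP Finset.subset_union_right).symm
  · obtain ⟨c, hsc, hc⟩ := Finite.exists_le_maximal (p := P) ⟨s.2, hs⟩
    exact ⟨⟨c, hc.prop.choose⟩, (hmem _).2 hc, hsc⟩
  · rintro ⟨t, ht, hst⟩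
    rw [hmem] at ht
    exact ht.prop.choose_spec.mono hst

/-- For any reduced word `u` there is a largest reduced word `sr(u)`, unique up
to permutation, such that for every reduced word `x`: `[u·x] ≼ u` iff
`x ≼ sr(u)`. Moreover `sr(u)` is commuting, a reduced word `x` is
right-absorbed by `u` iff `x ≼ sr(u)`, and the final segment of `u` satisfies
`ũ ≼ sr(u)`. -/
theorem sr_exists (G : SimpleGraph V) (u : Word G) (hu : WIsReduced G u) :
    ∃ m : Word G, WIsReduced G m ∧
      (∀ x : Word G, WIsReduced G x →
        ((∃ r, NSRed G (u ++ x) r ∧ WPreceq G r u) ↔ WPreceq G x m)) ∧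
      IsCommuting G m ∧
      (∀ x : Word G, WIsReduced G x → (RightAbsorbed G x u ↔ WPreceq G x m)) ∧
      (∀ t : Word G, IsFinalSegment G t u → WPreceq G t m) ∧
      (∀ m' : Word G, WIsReduced G m' →
        (∀ x : Word G, WIsReduced G x →
          ((∃ r, NSRed G (u ++ x) r ∧ WPreceq G r u) ↔ WPreceq G x m')) →
        WEquiv G m m') := by
  obtain ⟨m, hm, hmu⟩ := exists_isCommuting_rightAbsorbed_iff G u
  have hiff : ∀ x : Word G, WIsReduced G x → (RightAbsorbed G x u ↔ WPreceq G x m) := by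
    refine fun x hx => ⟨fun h => ?_, fun h s hs => (hmu s).2 (h.exists_subset hs)⟩
    exact wPreceq_of_forall_subset hm hx fun s hs => (hmu s).1 (h s hs)
  refine ⟨m, hm.wIsReduced, fun x hx => hu.exists_nsRed_iff.trans (hiff x hx), hm, hiff, ?_, ?_⟩
  · exact fun t ht => (hiff t ht.1.wIsReduced).1 fun s hs => ((ht.2 s).1 hs).letterRightAbsorbed
  · intro m' hm' h
    have key : ∀ x, WIsReduced G x → (WPreceq G x m ↔ WPreceq G x m') := fun x hx =>
      (hiff x hx).symm.trans (hu.exists_nsRed_iff.symm.trans (h x hx))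
    exact ((key m hm.wIsReduced).1 (.inr (.refl m))).antisymm
      ((key m' hm').2 (.inr (.refl m')))
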